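/- Let D be a non-trivial, non-symmetric 2-(v,k,3) design with 3 dividing r, admitting a flag-transitive, point-primitive automorphism group G that is almost simple with socle X = PSL(2,q), where X acts point-primitively on D with point stabilizer X_α maximal in X. Then X_α is not isomorphic to PGL(2,q₀) with q = 2^f = q₀ᵗ, t prime and q₀ ≠ 2; that is, the even-characteristic subfield case with v = q₀^{t−1}(q₀^{2t}−1)/(q₀²−1) does not occur. -/

import Mathlib

/-!
Suppose `|X_α| = |PGL(2, q₀)| = q₀ (q₀² - 1)` with `q₀ = 2 ^ s`. Fisher's inequality gives `k ≤ r`,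
so `r (k - 1) = 3 (v - 1)` forces `3 (v - 1) < r²`, whereas flag-transitivity makes `r` a divisor
of `|G_α| = |G : X| |X_α|`. As `X` has trivial centralizer, `G` embeds in `Aut SL(2, q)`, whose
order is at most `s t |SL(2, q)|`, so `|G : X| ≤ s t`. Since `v` is even, `r` is odd and divides
`|G : X| (q₀² - 1)`. As `v > q₀ ^ (3 (t - 1))`, this is incompatible with `3 (v - 1) < r²` for
`t ≥ 3`. For `t = 2` one has `v - 1 = q₀³ + q₀ - 1`, and a Bézout identity between `q₀³ + q₀ - 1`
and `q₀² - 1` shows that `r` divides `9 |G : X|`, which is too small unless `q₀` is `4` or `8`;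
there `r` has no admissible value either.

The bound on `Aut SL(2, q)` comes from Hua's identity. Up to conjugation, an injective endomorphism
fixes the upper and the lower unitriangular matrix with entry `1`, hence acts additively on the
centralizer of the former. A braid relation between upper and lower unitriangular matrices shows
that this additive map preserves inverses, so it is a ring homomorphism, and there are at most
`[F : 𝔽₂]` of those.
-/

open scoped Pointwise
open Matrix

namespace FT

variable {Pt : Type*}

/-- `IsDesign 𝓑 k lam` says that the family `𝓑` of subsets of the point set `Pt` is the
block set of a `2-(v, k, lam)` design: every block has `k` points and any two distinct
points lie on exactly `lam` common blocks. -/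
structure IsDesign (𝓑 : Set (Set Pt)) (k lam : ℕ) : Prop where
  block_card : ∀ B ∈ 𝓑, Nat.card B = k
  pair_count : ∀ x y : Pt, x ≠ y → Nat.card {B : Set Pt | B ∈ 𝓑 ∧ x ∈ B ∧ y ∈ B} = lam

/-- The group `G` acts on the design with point set `Pt` and block set `𝓑` as a group of
automorphisms. -/
def ActsOn (G : Type*) [Group G] [MulAction G Pt] (𝓑 : Set (Set Pt)) : Prop :=
  ∀ (g : G), ∀ B ∈ 𝓑, g • B ∈ 𝓑

/-- The group `G` is transitive on the flags (incident point-block pairs) of the design. -/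
def FlagTransitive (G : Type*) [Group G] [MulAction G Pt] (𝓑 : Set (Set Pt)) : Prop :=
  ∀ B ∈ 𝓑, ∀ C ∈ 𝓑, ∀ x ∈ B, ∀ y ∈ C, ∃ g : G, g • B = C ∧ g • x = y

/-- The action of `G` on `Pt` is primitive: it is transitive and every block of
imprimitivity is trivial. -/
def PointPrimitive (G : Type*) [Group G] (Pt : Type*) [MulAction G Pt] : Prop :=
  MulAction.IsPretransitive G Pt ∧
    ∀ s : Set Pt, MulAction.IsBlock G s → s.Subsingleton ∨ s = Set.univ

/-- The number of blocks of `𝓑` through the point `x` (the replication number, for a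
flag-transitive design). -/
noncomputable def repNum (𝓑 : Set (Set Pt)) (x : Pt) : ℕ :=
  Nat.card {B : Set Pt | B ∈ 𝓑 ∧ x ∈ B}

/-- The projective general linear group `PGL(2,K)`, as the quotient of `GL(2,K)` by its
center. -/
abbrev PGL2 (K : Type*) [Field K] :=
  GL (Fin 2) K ⧸ Subgroup.center (GL (Fin 2) K)

/-- The projective special linear group `PSL(2,K)`. -/
abbrev PSL2 (K : Type*) [Field K] := Matrix.ProjectiveSpecialLinearGroup (Fin 2) K

end FT

open FT

namespace FT

/-! ### Arithmetic of the replication number -/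

section Arithmetic

lemma three_mul_sq_le_four_pow {s : ℕ} (hs : 2 ≤ s) : 3 * s ^ 2 ≤ 4 ^ s := by
  induction s, hs using Nat.le_induction with
  | base => norm_num
  | succ s hs ih => rw [pow_succ _ s]; nlinarith

lemma mul_sq_lt_eight_pow {s : ℕ} (hs : 4 ≤ s) : 108 * s ^ 2 < 8 ^ s := by
  induction s, hs using Nat.le_induction with
  | base => norm_num
  | succ s hs ih => rw [pow_succ _ s]; nlinarith

lemma sq_mul_pow_four_le {s t : ℕ} (hs : 2 ≤ s) (ht : 2 ≤ t) :
    (s * (t + 1)) ^ 2 * (2 ^ s) ^ 4 ≤ 3 * ((2 ^ s) ^ t) ^ 3 := by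
  induction t, ht using Nat.le_induction with
  | base =>
    calc (s * (2 + 1)) ^ 2 * (2 ^ s) ^ 4 = 3 * (3 * s ^ 2) * (2 ^ s) ^ 4 := by ring
      _ ≤ 3 * 4 ^ s * (2 ^ s) ^ 4 := by gcongr; exact three_mul_sq_le_four_pow hs
      _ = 3 * ((2 ^ s) ^ 2) ^ 3 := by rw [show 4 = 2 ^ 2 from rfl, pow_right_comm]; ring
  | succ t ht ih =>
    have h₈ : 8 ≤ (2 ^ s) ^ 3 := Nat.pow_le_pow_left (Nat.le_self_pow (by omega) 2) 3
    calc (s * (t + 1 + 1)) ^ 2 * (2 ^ s) ^ 4 ≤ 8 * ((s * (t + 1)) ^ 2 * (2 ^ s) ^ 4) := by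
          rw [← mul_assoc]; gcongr; nlinarith [Nat.zero_le (s ^ 2)]
      _ ≤ (2 ^ s) ^ 3 * (3 * ((2 ^ s) ^ t) ^ 3) := by gcongr
      _ = 3 * ((2 ^ s) ^ (t + 1)) ^ 3 := by ring

lemma dvd_nine_mul_of_dvd {q n r : ℕ} (hq : 1 ≤ q) (h₁ : r ∣ 3 * (q ^ 3 + q - 1))
    (h₂ : r ∣ n * (q ^ 2 - 1)) : r ∣ 9 * n := by
  have h₃ : 1 ≤ q ^ 3 + q := hq.trans (Nat.le_add_left q _)
  zify [h₃, Nat.one_le_pow 2 q hq] at h₁ h₂ ⊢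
  -- A Bézout identity for the coprime polynomials `q³ + q - 1` and `q² - 1`.
  have bezout : (9 * n : ℤ) = n * (2 * q + 1) * (3 * (q ^ 3 + q - 1)) -
      3 * (2 * q ^ 2 + q + 4) * (n * (q ^ 2 - 1)) := by ring
  rw [bezout]
  exact dvd_sub (h₁.mul_left _) (h₂.mul_left _)

lemma sq_le_of_dvd_quadratic {s n r : ℕ} (hs : 2 ≤ s) (hn₀ : 0 < n) (hn : n ≤ s * 2)
    (h₁ : r ∣ 3 * ((2 ^ s) ^ 3 + 2 ^ s - 1)) (h₂ : r ∣ n * ((2 ^ s) ^ 2 - 1)) :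
    r ^ 2 ≤ 3 * ((2 ^ s) ^ 3 + 2 ^ s - 1) := by
  have hr : r ≤ 18 * s := by
    have := Nat.le_of_dvd (by omega) (dvd_nine_mul_of_dvd Nat.one_le_two_pow h₁ h₂)
    omega
  rcases lt_or_ge s 4 with hs₄ | hs₄
  · interval_cases s <;> norm_num at h₁ ⊢ <;> interval_cases r <;> omega
  · have h₈ : 8 ^ s ≤ (2 ^ s) ^ 3 + 2 ^ s - 1 := by
      rw [pow_right_comm, Nat.add_sub_assoc Nat.one_le_two_pow]
      exact Nat.le_add_right _ _
    calc r ^ 2 ≤ (18 * s) ^ 2 := Nat.pow_le_pow_left hr 2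
      _ = 3 * (108 * s ^ 2) := by ring
      _ ≤ 3 * 8 ^ s := by gcongr; exact (mul_sq_lt_eight_pow hs₄).le
      _ ≤ _ := by gcongr

lemma mul_sq_sub_one_eq {q t v : ℕ} (hq : 0 < q)
    (hv : v * (q * (q ^ 2 - 1)) = q ^ (t + 1) * ((q ^ (t + 1)) ^ 2 - 1)) :
    (v * (q ^ 2 - 1) : ℤ) = q ^ t * ((q ^ (t + 1)) ^ 2 - 1) := by
  have h : v * (q ^ 2 - 1) = q ^ t * ((q ^ (t + 1)) ^ 2 - 1) :=
    Nat.eq_of_mul_eq_mul_left hq (by rw [mul_left_comm, hv]; ring)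
  zify [Nat.one_le_pow 2 q hq, Nat.one_le_pow 2 _ (pow_pos hq (t + 1))] at h
  exact h

lemma even_of_mul_sq_sub_one_eq {q t v : ℕ} (hq : Even q) (ht : t ≠ 0)
    (hv : (v * (q ^ 2 - 1) : ℤ) = q ^ t * ((q ^ (t + 1)) ^ 2 - 1)) : Even v := by
  have h : Even (v * (q ^ 2 - 1) : ℤ) :=
    hv ▸ (((Int.even_coe_nat q).2 hq).pow_of_ne_zero ht).mul_right _
  have hodd : ¬ Even (q ^ 2 - 1 : ℤ) := by
    rw [Int.even_sub_one, not_not]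
    exact ((Int.even_coe_nat q).2 hq).pow_of_ne_zero two_ne_zero
  exact (Int.even_coe_nat v).1 ((Int.even_mul.1 h).resolve_right hodd)

lemma pow_three_lt_of_mul_sq_sub_one_eq {q t v : ℕ} (hq : 1 < q) (ht : t ≠ 0)
    (hv : (v * (q ^ 2 - 1) : ℤ) = q ^ t * ((q ^ (t + 1)) ^ 2 - 1)) : (q ^ t) ^ 3 < v := by
  have hy : (1 : ℤ) < q ^ t := by exact_mod_cast Nat.one_lt_pow ht hq
  have hq₂ : (0 : ℤ) < q ^ 2 - 1 := by nlinarith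
  zify
  refine lt_of_mul_lt_mul_right ?_ hq₂.le
  rw [hv, ← sub_pos]
  calc (0 : ℤ) < q ^ t * ((q ^ t) ^ 2 - 1) := by
        have := one_lt_pow₀ hy two_ne_zero
        apply mul_pos <;> linarith
    _ = q ^ t * ((q ^ (t + 1)) ^ 2 - 1) - (q ^ t) ^ 3 * (q ^ 2 - 1) := by ring

lemma eq_of_mul_sq_sub_one_eq {q v : ℕ} (hq : 1 < q)
    (hv : (v * (q ^ 2 - 1) : ℤ) = q ^ 1 * ((q ^ (1 + 1)) ^ 2 - 1)) : v = q ^ 3 + q := by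
  have hq₂ : (q ^ 2 - 1 : ℤ) ≠ 0 := by nlinarith
  zify
  refine mul_right_cancel₀ hq₂ (hv.trans ?_)
  ring

lemma dvd_of_dvd_two_pow_mul {s n r v m : ℕ} (hv₀ : v ≠ 0) (hv : Even v)
    (h₁ : r ∣ 3 * (v - 1)) (h₂ : r ∣ n * (2 ^ s * m)) : r ∣ n * m := by
  have hr : ¬ 2 ∣ r := fun h ↦ by
    have := h.trans h₁
    have := hv.two_dvd
    omega
  rw [mul_left_comm] at h₂
  exact (((Nat.prime_two.coprime_iff_not_dvd.2 hr).symm).pow_right s).dvd_of_dvd_mul_left h₂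

theorem sq_le_three_mul_sub_one {s t n r v : ℕ} (hs : 2 ≤ s) (ht : 1 ≤ t)
    (hv : v * (2 ^ s * ((2 ^ s) ^ 2 - 1)) = (2 ^ s) ^ (t + 1) * (((2 ^ s) ^ (t + 1)) ^ 2 - 1))
    (h₁ : r ∣ 3 * (v - 1)) (h₂ : r ∣ n * (2 ^ s * ((2 ^ s) ^ 2 - 1)))
    (hn₀ : 0 < n) (hn : n ≤ s * (t + 1)) : r ^ 2 ≤ 3 * (v - 1) := by
  have hq : 1 < 2 ^ s := Nat.one_lt_two_pow (by omega)
  have hv' := mul_sq_sub_one_eq (by positivity) hv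
  have hv₃ : ((2 ^ s) ^ t) ^ 3 < v := pow_three_lt_of_mul_sq_sub_one_eq hq (by omega) hv'
  have heven : Even v :=
    even_of_mul_sq_sub_one_eq (even_two.pow_of_ne_zero (by omega)) (by omega) hv'
  have h₂' : r ∣ n * ((2 ^ s) ^ 2 - 1) := dvd_of_dvd_two_pow_mul (by omega) heven h₁ h₂
  rcases ht.eq_or_lt' with rfl | ht
  · obtain rfl := eq_of_mul_sq_sub_one_eq hq hv'
    exact sq_le_of_dvd_quadratic hs hn₀ hn h₁ h₂'
  · have hpos : 0 < n * ((2 ^ s) ^ 2 - 1) :=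
      Nat.mul_pos hn₀ (Nat.sub_pos_of_lt (Nat.one_lt_pow two_ne_zero hq))
    calc r ^ 2 ≤ (s * (t + 1) * (2 ^ s) ^ 2) ^ 2 :=
          Nat.pow_le_pow_left ((Nat.le_of_dvd hpos h₂').trans
            (Nat.mul_le_mul hn (Nat.sub_le _ _))) 2
      _ = (s * (t + 1)) ^ 2 * (2 ^ s) ^ 4 := by ring
      _ ≤ 3 * ((2 ^ s) ^ t) ^ 3 := sq_mul_pow_four_le hs ht
      _ ≤ 3 * (v - 1) := Nat.mul_le_mul_left 3 (Nat.le_sub_one_of_lt hv₃)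
end Arithmetic

/-! ### Flag-transitive designs -/

section Designs

variable {Pt : Type*} {𝓑 : Set (Set Pt)} {k lam : ℕ}

open Classical in
/-- The incidence matrix of the family `𝓑`, with rows indexed by points and columns by blocks. It is
real so that one can speak of the positive definiteness of its Gram matrix. -/
noncomputable def incidenceMatrix (𝓑 : Set (Set Pt)) : Matrix Pt 𝓑 ℝ :=
  Matrix.of fun x B ↦ if x ∈ (B : Set Pt) then 1 else 0

lemma card_filter_mem_blocks [Fintype 𝓑] (p : Set Pt → Prop) [DecidablePred p] :
    Finset.card {B : 𝓑 | p B} = Nat.card {B : Set Pt | B ∈ 𝓑 ∧ p B} := by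
  rw [← Fintype.card_subtype, ← Nat.card_eq_fintype_card]
  exact Nat.card_congr (Equiv.subtypeSubtypeEquivSubtypeInter (· ∈ 𝓑) p)

lemma incidenceMatrix_mulVec_one [Fintype 𝓑] :
    incidenceMatrix 𝓑 *ᵥ 1 = fun x ↦ (repNum 𝓑 x : ℝ) := by
  classical
  ext x
  simp only [mulVec, dotProduct, incidenceMatrix, of_apply, Pi.one_apply, mul_one,
    Finset.sum_boole, repNum, card_filter_mem_blocks (x ∈ ·)]

lemma incidenceMatrix_mul_transpose_apply [Fintype 𝓑] (x y : Pt) :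
    (incidenceMatrix 𝓑 * (incidenceMatrix 𝓑)ᵀ) x y =
      Nat.card {B : Set Pt | B ∈ 𝓑 ∧ x ∈ B ∧ y ∈ B} := by
  classical
  simp only [mul_apply, transpose_apply, incidenceMatrix, of_apply, ite_zero_mul_ite_zero, mul_one,
    Finset.sum_boole, card_filter_mem_blocks fun B ↦ x ∈ B ∧ y ∈ B]

namespace IsDesign

lemma transpose_incidenceMatrix_mulVec_one [Fintype Pt] (hD : IsDesign 𝓑 k lam) :
    (incidenceMatrix 𝓑)ᵀ *ᵥ 1 = (k : ℝ) • 1 := by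
  classical
  ext B
  simp only [mulVec, dotProduct, transpose_apply, incidenceMatrix, of_apply, Pi.one_apply, mul_one,
    Pi.smul_apply, smul_eq_mul, Finset.sum_boole, ← hD.block_card B B.2, Nat.card_eq_fintype_card,
    Fintype.card_subtype]

lemma incidenceMatrix_mul_transpose [Fintype 𝓑] [DecidableEq Pt] (hD : IsDesign 𝓑 k lam) :
    incidenceMatrix 𝓑 * (incidenceMatrix 𝓑)ᵀ =
      diagonal (fun x ↦ (repNum 𝓑 x - lam : ℝ)) + (lam : ℝ) • vecMulVec 1 1 := by
  ext x y
  rw [incidenceMatrix_mul_transpose_apply]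
  obtain rfl | hxy := eq_or_ne x y
  · simp [repNum]
  · rw [hD.pair_count x y hxy]
    simp [hxy]

section Finite

variable [Finite Pt]

theorem repNum_mul_sub_one (hD : IsDesign 𝓑 k lam) (hk : 1 ≤ k) (x : Pt) :
    repNum 𝓑 x * (k - 1) = lam * (Nat.card Pt - 1) := by
  classical
  have := Fintype.ofFinite Pt
  have := Fintype.ofFinite 𝓑
  have hv : 1 ≤ Nat.card Pt := Nat.card_pos_iff.2 ⟨⟨x⟩, ‹_›⟩
  -- Both sides come from evaluating `N Nᵀ 1`, where `N` is the incidence matrix.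
  have h := congrFun (congrArg (· *ᵥ 1) hD.incidenceMatrix_mul_transpose) x
  have h' : (repNum 𝓑 x * (k - 1) : ℝ) = lam * (Nat.card Pt - 1) := by
    simp only [← mulVec_mulVec, hD.transpose_incidenceMatrix_mulVec_one, mulVec_smul,
      incidenceMatrix_mulVec_one, add_mulVec, smul_mulVec, vecMulVec_mulVec, one_dotProduct_one,
      Pi.add_apply, Pi.smul_apply, mulVec_diagonal, Pi.one_apply, mul_one, smul_eq_mul,
      op_smul_eq_mul, one_mul, ← Nat.card_eq_fintype_card] at h
    linarith
  exact_mod_cast h'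

theorem card_blocks_mul (hD : IsDesign 𝓑 k lam) (x : Pt) (hk : 1 < k) :
    Nat.card 𝓑 * k = Nat.card Pt * repNum 𝓑 x := by
  have := Fintype.ofFinite Pt
  have := Fintype.ofFinite 𝓑
  have hconst (y : Pt) : repNum 𝓑 y = repNum 𝓑 x :=
    Nat.eq_of_mul_eq_mul_right (Nat.sub_pos_of_lt hk)
      ((hD.repNum_mul_sub_one hk.le y).trans (hD.repNum_mul_sub_one hk.le x).symm)
  have h := dotProduct_mulVec 1 (incidenceMatrix 𝓑) 1
  rw [incidenceMatrix_mulVec_one, ← mulVec_transpose, hD.transpose_incidenceMatrix_mulVec_one] at h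
  simp only [hconst, dotProduct, Pi.one_apply, Pi.smul_apply, smul_eq_mul, one_mul, mul_one,
    Finset.sum_const, Finset.card_univ, nsmul_eq_mul, ← Nat.card_eq_fintype_card] at h
  exact_mod_cast h.symm

theorem lt_repNum (hD : IsDesign 𝓑 k lam) (hlam : 0 < lam) (hk : 1 ≤ k) (hkv : k < Nat.card Pt)
    (x : Pt) : lam < repNum 𝓑 x := by
  by_contra! h
  have := hD.repNum_mul_sub_one hk x
  have : lam * (Nat.card Pt - 1) ≤ lam * (k - 1) := this ▸ Nat.mul_le_mul_right _ h
  have := Nat.le_of_mul_le_mul_left this hlam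
  omega

theorem fisher_inequality (hD : IsDesign 𝓑 k lam) (hlam : 0 < lam) (hk : 1 ≤ k)
    (hkv : k < Nat.card Pt) : Nat.card Pt ≤ Nat.card 𝓑 := by
  classical
  have := Fintype.ofFinite Pt
  have := Fintype.ofFinite 𝓑
  have hdiag : (diagonal fun x ↦ (repNum 𝓑 x - lam : ℝ)).PosDef := .diagonal fun x ↦
    sub_pos.2 (Nat.cast_lt.2 (hD.lt_repNum hlam hk hkv x))
  have hones : ((lam : ℝ) • vecMulVec (1 : Pt → ℝ) 1).PosSemidef := by
    simpa using (posSemidef_vecMulVec_self_star (1 : Pt → ℝ)).smul (Nat.cast_nonneg (α := ℝ) lam)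
  have hgram := (hdiag.add_posSemidef hones).isUnit
  rw [← hD.incidenceMatrix_mul_transpose] at hgram
  calc Nat.card Pt = (incidenceMatrix 𝓑 * (incidenceMatrix 𝓑)ᵀ).rank := by
        rw [rank_of_isUnit _ hgram, Nat.card_eq_fintype_card]
    _ ≤ (incidenceMatrix 𝓑).rank := rank_mul_le_left _ _
    _ ≤ Nat.card 𝓑 := (rank_le_card_width _).trans_eq Nat.card_eq_fintype_card.symm

theorem le_repNum (hD : IsDesign 𝓑 k lam) (hlam : 0 < lam) (hk : 1 < k)
    (hkv : k < Nat.card Pt) (x : Pt) : k ≤ repNum 𝓑 x := by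
  refine Nat.le_of_mul_le_mul_left ?_ (Nat.zero_lt_of_lt hkv)
  rw [← hD.card_blocks_mul x hk]
  exact Nat.mul_le_mul_right k (hD.fisher_inequality hlam hk.le hkv)

theorem mul_sub_one_lt_repNum_sq (hD : IsDesign 𝓑 k lam) (hlam : 0 < lam) (hk : 1 < k)
    (hkv : k < Nat.card Pt) (x : Pt) : lam * (Nat.card Pt - 1) < repNum 𝓑 x ^ 2 := by
  have hle := hD.le_repNum hlam hk hkv x
  rw [← hD.repNum_mul_sub_one hk.le x, sq]
  exact Nat.mul_lt_mul_of_pos_left (by omega) (by omega)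

end Finite

end IsDesign
end Designs

section GroupActions

variable {G Pt : Type*} [Group G] [MulAction G Pt]

lemma repNum_dvd_card_stabilizer {𝓑 : Set (Set Pt)} (hacts : ActsOn G 𝓑)
    (hflag : FlagTransitive G 𝓑) {x : Pt} (hx : repNum 𝓑 x ≠ 0) :
    repNum 𝓑 x ∣ Nat.card (MulAction.stabilizer G x) := by
  obtain ⟨⟨B, hB, hxB⟩⟩ := (Nat.card_ne_zero.1 hx).1
  have horbit : MulAction.orbit (MulAction.stabilizer G x) B = {C | C ∈ 𝓑 ∧ x ∈ C} := by
    ext C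
    constructor
    · rintro ⟨⟨g, hg⟩, rfl⟩
      exact ⟨hacts g B hB, x, hxB, hg⟩
    · rintro ⟨hC, hxC⟩
      obtain ⟨g, hgB, hgx⟩ := hflag B hB C hC x hxB x hxC
      exact ⟨⟨g, hgx⟩, hgB⟩
  rw [repNum, ← horbit, Nat.card_coe_set_eq, ← MulAction.index_stabilizer]
  exact Subgroup.index_dvd_card _

lemma card_stabilizer_eq_index_mul [Finite Pt] (X : Subgroup G) [MulAction.IsPretransitive X Pt]
    (x : Pt) : Nat.card (MulAction.stabilizer G x) =
      X.index * Nat.card (MulAction.stabilizer X x) := by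
  have : MulAction.IsPretransitive G Pt :=
    ⟨fun y z ↦ (MulAction.exists_smul_eq X y z).imp' X.subtype fun _ h ↦ h⟩
  have hG := (MulAction.stabilizer G x).card_mul_index
  have hX := (MulAction.stabilizer X x).card_mul_index
  rw [MulAction.index_stabilizer_of_transitive] at hG hX
  have hv : Nat.card Pt ≠ 0 := Nat.card_ne_zero.2 ⟨⟨x⟩, ‹_›⟩
  refine mul_right_cancel₀ hv ?_
  rw [hG, mul_assoc, hX, mul_comm, X.card_mul_index]

lemma conjNormal_injective {X : Subgroup G} [X.Normal]
    (hX : Subgroup.centralizer (X : Set G) = ⊥) :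
    Function.Injective (MulAut.conjNormal : G →* MulAut X) := by
  refine (injective_iff_map_eq_one _).2 fun g hg ↦ ?_
  rw [← Subgroup.mem_bot, ← hX, Subgroup.mem_centralizer_iff]
  intro x hx
  have hgx : g * x * g⁻¹ = x := by
    simpa only [MulAut.conjNormal_apply, MulAut.one_apply] using
      congrArg Subtype.val (DFunLike.congr_fun hg ⟨x, hx⟩)
  exact (mul_inv_eq_iff_eq_mul.1 hgx).symm

end GroupActions

/-! ### Automorphisms of `SL(2, 2 ^ f)` -/

section Hua

variable {F K : Type*} [Field F] [Field K]

lemma hua_identity {x y : F} (hx : x ≠ 0) (hy : y ≠ 0) (hxy : x * y ≠ 1) :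
    x - (x⁻¹ + (y⁻¹ - x)⁻¹)⁻¹ = x ^ 2 * y := by
  have h₁ : 1 - x * y ≠ 0 := sub_ne_zero.2 hxy.symm
  have h₂ : y⁻¹ - x = (1 - x * y) / y := by field_simp
  have h₃ : x⁻¹ + (y⁻¹ - x)⁻¹ = 1 / (x * (1 - x * y)) := by
    rw [h₂]
    field_simp
    ring
  rw [h₃]
  field_simp
  ring

lemma map_inv_of_map_mul_map_inv {a : F →+ K} (ha : ∀ x ≠ 0, a x * a x⁻¹ = 1) (x : F) :
    a x⁻¹ = (a x)⁻¹ := by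
  rcases eq_or_ne x 0 with rfl | hx
  · simp
  · exact eq_inv_of_mul_eq_one_right (ha x hx)

lemma map_sq_mul_of_map_mul_map_inv {a : F →+ K} (ha : ∀ x ≠ 0, a x * a x⁻¹ = 1) (x y : F) :
    a (x ^ 2 * y) = a x ^ 2 * a y := by
  have ha₀ {z : F} (hz : z ≠ 0) : a z ≠ 0 := left_ne_zero_of_mul_eq_one (ha z hz)
  rcases eq_or_ne x 0 with rfl | hx
  · simp
  rcases eq_or_ne y 0 with rfl | hy
  · simp
  by_cases hxy : x * y = 1
  · obtain rfl : y = x⁻¹ := eq_inv_of_mul_eq_one_right hxy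
    rw [pow_two, mul_inv_cancel_right₀ hx, pow_two, mul_assoc, ha x hx, mul_one]
  have haxy : a x * a y ≠ 1 := by
    intro h
    have h' : a (x - y⁻¹) = 0 := by
      rw [map_sub, map_inv_of_map_mul_map_inv ha, eq_inv_of_mul_eq_one_left h, sub_self]
    refine ha₀ (sub_ne_zero.2 fun hx' ↦ hxy ?_) h'
    rw [hx', inv_mul_cancel₀ hy]
  rw [← hua_identity hx hy hxy, ← hua_identity (ha₀ hx) (ha₀ hy) haxy]
  simp only [map_sub, map_add, map_inv_of_map_mul_map_inv ha]

theorem exists_ringHom_of_map_mul_map_inv [CharP F 2] [PerfectRing F 2] {a : F →+ K}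
    (ha : ∀ x ≠ 0, a x * a x⁻¹ = 1) (ha₁ : a 1 = 1) : ∃ σ : F →+* K, ∀ x, σ x = a x := by
  refine ⟨{ a with
    map_one' := ha₁
    map_mul' := fun x y ↦ ?_ }, fun _ ↦ rfl⟩
  obtain ⟨z, rfl⟩ := surjective_frobenius F 2 x
  have hz : a (z ^ 2) = a z ^ 2 := by
    simpa [ha₁] using map_sq_mul_of_map_mul_map_inv ha z 1
  exact (map_sq_mul_of_map_mul_map_inv ha z y).trans (by rw [← hz]; rfl)

end Hua

section Linear

open scoped MatrixGroups

section CommRing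

variable {R : Type*} [CommRing R]

/-- The upper unitriangular matrix `!![1, x; 0, 1]` of `SL(2, R)`. Those with arbitrary `x` embed
the additive group of `R` in `SL(2, R)`; an automorphism is read off from its effect on them. -/
def upper (x : R) : SL(2, R) := Matrix.SpecialLinearGroup.transvection zero_ne_one x

/-- The lower unitriangular matrix `!![1, 0; x, 1]` of `SL(2, R)`. With the upper ones these
generate `SL(2, R)` when `R` is a field. -/
def lower (x : R) : SL(2, R) := Matrix.SpecialLinearGroup.transvection one_ne_zero x

lemma coe_upper (x : R) : (upper x : Matrix (Fin 2) (Fin 2) R) = !![1, x; 0, 1] := by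
  ext i j
  fin_cases i <;> fin_cases j <;> simp [upper, Matrix.SpecialLinearGroup.transvection_coe]

lemma coe_lower (x : R) : (lower x : Matrix (Fin 2) (Fin 2) R) = !![1, 0; x, 1] := by
  ext i j
  fin_cases i <;> fin_cases j <;> simp [lower, Matrix.SpecialLinearGroup.transvection_coe]

lemma upper_add (x y : R) : upper (x + y) = upper x * upper y :=
  Matrix.SpecialLinearGroup.transvection_add zero_ne_one x y

lemma commute_upper (x y : R) : Commute (upper x) (upper y) := by
  rw [commute_iff_eq, ← upper_add, ← upper_add, add_comm]

lemma upper_zero : upper (0 : R) = 1 :=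
  Matrix.SpecialLinearGroup.transvection_coeff_zero zero_ne_one

lemma upper_injective : Function.Injective (upper : R → SL(2, R)) := fun x y h ↦ by
  simpa [coe_upper] using congr(($h : Matrix (Fin 2) (Fin 2) R) 0 1)

lemma upper_eq_one_iff {x : R} : upper x = 1 ↔ x = 0 := by
  rw [← upper_zero, upper_injective.eq_iff]

lemma weyl_mul_upper (x : R) :
    upper 1 * lower (-1) * upper 1 * upper x = lower (-x) * (upper 1 * lower (-1) * upper 1) := by
  ext i j
  fin_cases i <;> fin_cases j <;> simp [coe_upper, coe_lower]

lemma upper_lower_braid_iff [NoZeroDivisors R] {x y : R} (hx : x ≠ 0) :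
    upper x * lower y * upper x = lower y * upper x * lower y ↔ x * y = -1 := by
  constructor
  · intro h
    have h₀₁ : x + (1 + x * y) * x = x := by
      simpa [coe_upper, coe_lower, add_comm] using congr(($h : Matrix (Fin 2) (Fin 2) R) 0 1)
    have h₀ : (1 + x * y) * x = 0 := by linear_combination h₀₁
    linear_combination (mul_eq_zero.1 h₀).resolve_right hx
  · intro h
    ext i j
    fin_cases i <;> fin_cases j <;> simp [coe_upper, coe_lower] <;> grind

lemma map_upper {S : Type*} [CommRing S] (σ : R →+* S) (x : R) :
    Matrix.SpecialLinearGroup.map σ (upper x) = upper (σ x) := by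
  ext i j
  fin_cases i <;> fin_cases j <;> simp [coe_upper]

lemma map_lower {S : Type*} [CommRing S] (σ : R →+* S) (x : R) :
    Matrix.SpecialLinearGroup.map σ (lower x) = lower (σ x) := by
  ext i j
  fin_cases i <;> fin_cases j <;> simp [coe_lower]

lemma apply_one_one_of_mul_self_eq_one {A : SL(2, R)} (h : A * A = 1) : A 1 1 = A 0 0 := by
  conv_rhs => rw [eq_inv_of_mul_eq_one_left h, Matrix.SpecialLinearGroup.SL2_inv_expl]
  simp

lemma coe_conj_upper (g : SL(2, R)) (x : R) :
    (g * upper x * g⁻¹ : SL(2, R)) = !![1 - x * (g 0 0 * g 1 0), x * g 0 0 ^ 2;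
      -(x * g 1 0 ^ 2), 1 + x * (g 0 0 * g 1 0)] := by
  have hdet := g.det_coe
  rw [det_fin_two] at hdet
  ext i j
  fin_cases i <;> fin_cases j <;>
    simp [coe_upper, adjugate_fin_two, Matrix.mul_apply, Fin.sum_univ_two] <;> grind

end CommRing

section CharTwo

variable {K : Type*} [Field K] [CharP K 2]

lemma upper_mul_self (x : K) : upper x * upper x = 1 := by
  rw [← upper_add, CharTwo.add_self_eq_zero, upper_zero]

lemma lower_mul_self (x : K) : lower x * lower x = 1 := by
  rw [lower, ← Matrix.SpecialLinearGroup.transvection_add, CharTwo.add_self_eq_zero,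
    Matrix.SpecialLinearGroup.transvection_coeff_zero]

lemma eq_upper_of_apply_one_zero {A : SL(2, K)} (h₁₀ : A 1 0 = 0) (h₁₁ : A 1 1 = A 0 0) :
    A = upper (A 0 1) := by
  have h₀₀ : A 0 0 = 1 := by
    have hdet := A.det_coe
    rw [det_fin_two, h₁₀, h₁₁] at hdet
    rw [← CharTwo.sq_inj]
    linear_combination hdet
  ext i j
  fin_cases i <;> fin_cases j <;> simp [coe_upper, h₁₀, h₁₁, h₀₀]

lemma eq_upper_of_commute {A : SL(2, K)} (h : Commute A (upper 1)) : A = upper (A 0 1) := by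
  have h₀₀ := congr(($(h.eq) : Matrix (Fin 2) (Fin 2) K) 0 0)
  have h₀₁ := congr(($(h.eq) : Matrix (Fin 2) (Fin 2) K) 0 1)
  simp only [Matrix.SpecialLinearGroup.coe_mul, coe_upper, mul_apply, Fin.sum_univ_two, of_apply,
    cons_val_zero, cons_val_one, mul_one, mul_zero, one_mul, add_zero] at h₀₀ h₀₁
  exact eq_upper_of_apply_one_zero (by linear_combination -h₀₀) (by linear_combination -h₀₁)

lemma isConj_upper_one_of_mul_self_eq_one [PerfectRing K 2] {A : SL(2, K)} (h₂ : A * A = 1)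
    (h₁ : A ≠ 1) : IsConj (upper 1) A := by
  obtain ⟨p, hp⟩ := surjective_frobenius K 2 (A 0 1)
  obtain ⟨s, hs⟩ := surjective_frobenius K 2 (A 1 0)
  rw [frobenius_def] at hp hs
  have h₁₁ := apply_one_one_of_mul_self_eq_one h₂
  have h₀₀ : A 0 0 = 1 + p * s := by
    have hdet := A.det_coe
    rw [det_fin_two, h₁₁, ← hp, ← hs] at hdet
    rw [← CharTwo.sq_inj, CharTwo.add_sq]
    linear_combination hdet
  have hps : p ≠ 0 ∨ s ≠ 0 := by
    by_contra! ⟨rfl, rfl⟩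
    refine h₁ (Matrix.SpecialLinearGroup.ext _ _ fun i j ↦ ?_)
    fin_cases i <;> fin_cases j <;> simp [← hp, ← hs, h₁₁, h₀₀]
  have hcop : IsCoprime p s := hps.elim
    (fun h ↦ ⟨p⁻¹, 0, by simp [h]⟩) (fun h ↦ ⟨0, s⁻¹, by simp [h]⟩)
  obtain ⟨g, rfl, rfl⟩ := hcop.exists_SL2_col 0
  refine isConj_iff.2 ⟨g, Matrix.SpecialLinearGroup.ext _ _ fun i j ↦ ?_⟩
  rw [coe_conj_upper]
  fin_cases i <;> fin_cases j <;>
    simp [hp, hs, h₁₁, h₀₀, CharTwo.neg_eq, CharTwo.sub_eq_add]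

lemma eq_conj_lower_one_of_braid {A : SL(2, K)} (h₂ : A * A = 1) (hA : A ≠ upper 1)
    (h : A * upper 1 * A = upper 1 * A * upper 1) :
    A = upper (A 0 0 + 1) * lower 1 * (upper (A 0 0 + 1))⁻¹ := by
  have h₁₁ := apply_one_one_of_mul_self_eq_one h₂
  have h₁₀ : A 1 0 = 1 := by
    have hb := congr(($h : Matrix (Fin 2) (Fin 2) K) 1 0)
    simp only [Matrix.SpecialLinearGroup.coe_mul, coe_upper, mul_apply, Fin.sum_univ_two, of_apply,
      cons_val_zero, cons_val_one, mul_one, mul_zero, one_mul, zero_mul, zero_add, add_zero] at hb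
    have hc : A 1 0 * (A 1 0 - 1) = 0 := by
      linear_combination hb - A 1 0 * h₁₁ - A 1 0 * A 0 0 * CharTwo.two_eq_zero (R := K)
    refine sub_eq_zero.1 ((mul_eq_zero.1 hc).resolve_left fun h₁₀ ↦ hA ?_)
    have hu := eq_upper_of_apply_one_zero h₁₀ h₁₁
    generalize A 0 1 = b at hu
    subst hu
    simp only [← upper_add] at h
    rw [upper_injective.eq_iff] at h ⊢
    linear_combination h
  have hdet := A.det_coe
  rw [det_fin_two, h₁₁, h₁₀] at hdet
  rw [eq_mul_inv_iff_mul_eq]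
  ext i j
  fin_cases i <;> fin_cases j <;>
    simp [coe_upper, coe_lower, mul_apply, Fin.sum_univ_two, h₁₀, h₁₁]
  all_goals grind

lemma exists_addMonoidHom_map_upper {R : Type*} [CommRing R] {ψ : SL(2, R) →* SL(2, K)}
    (hu : ψ (upper 1) = upper 1) : ∃ a : R →+ K, ∀ x, ψ (upper x) = upper (a x) := by
  have h (x : R) : ∃ y, ψ (upper x) = upper y :=
    ⟨_, eq_upper_of_commute (hu ▸ (commute_upper x 1).map ψ)⟩
  choose a ha using h
  refine ⟨AddMonoidHom.mk' a fun x y ↦ upper_injective ?_, ha⟩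
  rw [← ha, upper_add, map_mul, ha, ha, upper_add]

end CharTwo

section Hom

variable {F K : Type*} [Field F] [CharP F 2] [Field K] [CharP K 2]

lemma map_lower_of_map_upper {ψ : SL(2, F) →* SL(2, K)} (hu : ψ (upper 1) = upper 1)
    (hl : ψ (lower 1) = lower 1) {x : F} {y : K} (h : ψ (upper x) = upper y) :
    ψ (lower x) = lower y := by
  have hx := congr(ψ $(weyl_mul_upper x))
  have hy := weyl_mul_upper y
  simp only [CharTwo.neg_eq, map_mul, hu, hl, h] at hx hy
  exact mul_right_cancel (hx.symm.trans hy)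

theorem exists_ringHom_eq_map [PerfectRing F 2] {ψ : SL(2, F) →* SL(2, K)}
    (hψ : Function.Injective ψ) (hu : ψ (upper 1) = upper 1) (hl : ψ (lower 1) = lower 1) :
    ∃ σ : F →+* K, ψ = Matrix.SpecialLinearGroup.map σ := by
  obtain ⟨a, ha⟩ := exists_addMonoidHom_map_upper hu
  have hal (x : F) : ψ (lower x) = lower (a x) := map_lower_of_map_upper hu hl (ha x)
  have ha₁ : a 1 = 1 := upper_injective ((ha 1).symm.trans hu)
  have ha₀ {x : F} (hx : x ≠ 0) : a x ≠ 0 := fun h ↦ hx <| upper_eq_one_iff.1 <| hψ <| by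
    rw [ha, h, upper_zero, map_one]
  have hinv (x : F) (hx : x ≠ 0) : a x * a x⁻¹ = 1 := by
    have hbraid := congr(ψ $((upper_lower_braid_iff hx).2
      ((mul_inv_cancel₀ hx).trans (CharTwo.neg_eq 1).symm)))
    simp only [map_mul, ha, hal] at hbraid
    rw [(upper_lower_braid_iff (ha₀ hx)).1 hbraid, CharTwo.neg_eq]
  obtain ⟨σ, hσ⟩ := exists_ringHom_of_map_mul_map_inv hinv ha₁
  refine ⟨σ, MonoidHom.ext fun A ↦ ?_⟩
  induction A using SL2.transvection_induction with
  | htransvec i j hij c =>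
    fin_cases i <;> fin_cases j
    · exact absurd rfl hij
    · exact (ha c).trans (by rw [← hσ, ← map_upper]; rfl)
    · exact (hal c).trans (by rw [← hσ, ← map_lower]; rfl)
    · exact absurd rfl hij
  | hmul A B hA hB => rw [map_mul, map_mul, hA, hB]

lemma exists_conj_map_upper_map_lower [PerfectRing K 2] {φ : SL(2, F) →* SL(2, K)}
    (hφ : Function.Injective φ) : ∃ g : SL(2, K),
      φ (upper 1) = g * upper 1 * g⁻¹ ∧ φ (lower 1) = g * lower 1 * g⁻¹ := by
  have hu₁ : (upper 1 : SL(2, F)) ≠ 1 := mt upper_eq_one_iff.1 one_ne_zero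
  have hul : (lower 1 : SL(2, F)) ≠ upper 1 := fun h ↦ by
    simpa [coe_upper, coe_lower] using congr(($h : Matrix (Fin 2) (Fin 2) F) 1 0)
  have hbraid : lower 1 * upper 1 * lower 1 = (upper 1 * lower 1 * upper 1 : SL(2, F)) :=
    ((upper_lower_braid_iff one_ne_zero).2 ((one_mul 1).trans (CharTwo.neg_eq 1).symm)).symm
  obtain ⟨g, hg⟩ := isConj_iff.1 <| isConj_upper_one_of_mul_self_eq_one
    (by rw [← map_mul, upper_mul_self, map_one]) (hφ.ne_iff' (map_one φ) |>.2 hu₁)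
  let ψ : SL(2, F) →* SL(2, K) := (MulAut.conj g⁻¹).toMonoidHom.comp φ
  have hψ : Function.Injective ψ := (MulAut.conj g⁻¹).injective.comp hφ
  have hψφ (A : SL(2, F)) : φ A = g * ψ A * g⁻¹ := by simp [ψ, mul_assoc]
  have hψu : ψ (upper 1) = upper 1 := by simp [ψ, ← hg, mul_assoc]
  have hψl := eq_conj_lower_one_of_braid (A := ψ (lower 1))
    (by rw [← map_mul, lower_mul_self, map_one]) (hψu ▸ hψ.ne hul)
    (by simp only [← hψu, ← map_mul, hbraid])
  have hconj {A : SL(2, F)} {B u : SL(2, K)} (h : ψ A = u * B * u⁻¹) :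
      φ A = g * u * B * (g * u)⁻¹ := by
    rw [hψφ, h]
    group
  exact ⟨_, hconj (hψu.trans (commute_upper _ 1).mul_inv_cancel.symm), hconj hψl⟩

theorem exists_conj_ringHom_map [PerfectRing F 2] [PerfectRing K 2] {φ : SL(2, F) →* SL(2, K)}
    (hφ : Function.Injective φ) : ∃ (g : SL(2, K)) (σ : F →+* K),
      ∀ A, φ A = g * Matrix.SpecialLinearGroup.map σ A * g⁻¹ := by
  obtain ⟨g, hu, hl⟩ := exists_conj_map_upper_map_lower hφ
  obtain ⟨σ, hσ⟩ := exists_ringHom_eq_map (ψ := (MulAut.conj g⁻¹).toMonoidHom.comp φ)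
    ((MulAut.conj g⁻¹).injective.comp hφ) (by simp [hu, mul_assoc]) (by simp [hl, mul_assoc])
  exact ⟨g, σ, fun A ↦ by simp [← hσ, mul_assoc]⟩

end Hom

lemma card_ringHom_le_finrank (p : ℕ) (F K : Type*) [Field F] [Field K] [Algebra (ZMod p) F]
    [Algebra (ZMod p) K] [Fact p.Prime] [Module.Finite (ZMod p) F] :
    Nat.card (F →+* K) ≤ Module.finrank (ZMod p) F := by
  refine le_trans (Nat.card_le_card_of_injective (β := F →ₐ[ZMod p] K)
    (fun σ ↦ { σ with commutes' := fun c ↦ ?_ }) fun σ τ h ↦ ?_)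
    (card_algHom_le_finrank (ZMod p) F K)
  · exact congr($(Subsingleton.elim (σ.comp (algebraMap (ZMod p) F)) (algebraMap (ZMod p) K)) c)
  · exact RingHom.ext fun x ↦ congr($h x)

lemma card_ringHom_le {p f : ℕ} [Fact p.Prime] {F K : Type*} [Field F] [CharP F p] [Field K]
    [CharP K p] (hF : Nat.card F = p ^ f) : Nat.card (F →+* K) ≤ f := by
  let _ := ZMod.algebra F p
  let _ := ZMod.algebra K p
  have : Finite F := Nat.finite_of_card_ne_zero (hF ▸ pow_ne_zero f (NeZero.ne p))
  have : Module.Finite (ZMod p) F := .of_finite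
  have hf : f = Module.finrank (ZMod p) F := by
    rw [Module.natCard_eq_pow_finrank (K := ZMod p), Nat.card_zmod] at hF
    exact (Nat.pow_right_injective (Fact.out : p.Prime).two_le hF).symm
  exact hf ▸ card_ringHom_le_finrank p F K

theorem card_mulAut_SL2_le {F : Type*} [Field F] [CharP F 2] {f : ℕ} (hF : Nat.card F = 2 ^ f) :
    Nat.card (MulAut SL(2, F)) ≤ Nat.card SL(2, F) * f := by
  have : Finite F := Nat.finite_of_card_ne_zero (hF ▸ pow_ne_zero f two_ne_zero)
  have : Finite (F →+* F) := DFunLike.finite _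
  choose g σ h using fun φ : MulAut SL(2, F) ↦
    exists_conj_ringHom_map (φ := φ.toMonoidHom) φ.injective
  calc Nat.card (MulAut SL(2, F))
      ≤ Nat.card (SL(2, F) × (F →+* F)) :=
        Nat.card_le_card_of_injective (fun φ ↦ (g φ, σ φ)) fun φ φ' hgσ ↦ MulEquiv.ext fun A ↦ by
          obtain ⟨hg, hσ⟩ := Prod.mk.inj hgσ
          exact (h φ A).trans (by rw [hg, hσ]; exact (h φ' A).symm)
    _ ≤ Nat.card SL(2, F) * f := by
        rw [Nat.card_prod]
        exact Nat.mul_le_mul_left _ (card_ringHom_le hF)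

lemma center_SL2_eq_bot (F : Type*) [Field F] [CharP F 2] : Subgroup.center SL(2, F) = ⊥ := by
  refine eq_bot_iff.2 fun A hA ↦ ?_
  obtain ⟨r, hr, hA⟩ := Matrix.SpecialLinearGroup.mem_center_iff.1 hA
  rw [Fintype.card_fin, ← one_pow 2, CharTwo.sq_inj] at hr
  exact Subtype.ext (by rw [← hA, hr, map_one]; rfl)

/-- The identification of `PSL(2, F)` with `SL(2, F)` in characteristic two, where the center is
trivial; it turns elements of `PSL(2, F)` into matrices. -/
noncomputable def psl2EquivSL2 (F : Type*) [Field F] [CharP F 2] : PSL2 F ≃* SL(2, F) :=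
  (QuotientGroup.quotientMulEquivOfEq (center_SL2_eq_bot F)).trans QuotientGroup.quotientBot

section Orders

lemma card_GL_eq_card_SL_mul_card_units (n R : Type*) [Fintype n] [DecidableEq n] [Nonempty n]
    [CommRing R] :
    Nat.card (GL n R) = Nat.card (SpecialLinearGroup n R) * Nat.card Rˣ := by
  have hker : Nat.card (GeneralLinearGroup.det : GL n R →* Rˣ).ker =
      Nat.card (SpecialLinearGroup n R) :=
    (Nat.card_congr (.setCongr Matrix.SpecialLinearGroup.range_toGL.symm)).trans
      (Nat.card_range_of_injective Matrix.SpecialLinearGroup.toGL_injective)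
  rw [← Subgroup.card_mul_index (GeneralLinearGroup.det : GL n R →* Rˣ).ker, hker,
    Subgroup.index_ker, MonoidHom.range_eq_top.2 GeneralLinearGroup.det_surjective,
    Subgroup.card_top]

lemma card_GL_eq_card_PGL_mul_card_units (n R : Type*) [Fintype n] [DecidableEq n] [Nonempty n]
    [CommRing R] :
    Nat.card (GL n R) = Nat.card (GL n R ⧸ Subgroup.center (GL n R)) * Nat.card Rˣ := by
  have hscalar : Function.Injective (GeneralLinearGroup.scalar n : Rˣ → GL n R) := fun a b h ↦
    Units.ext (scalar_inj.1 congr(($h : Matrix n n R)))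
  rw [Subgroup.card_eq_card_quotient_mul_card_subgroup (Subgroup.center (GL n R)),
    GeneralLinearGroup.center_eq_range_scalar]
  congr 1
  exact Nat.card_range_of_injective hscalar

lemma card_SL2 (K : Type*) [Field K] [Finite K] :
    Nat.card SL(2, K) = Nat.card K * (Nat.card K ^ 2 - 1) := by
  have := Fintype.ofFinite K
  have hGL := Matrix.card_GL_field (𝔽 := K) 2
  have hpos : 0 < Nat.card Kˣ := Nat.card_pos
  rw [card_GL_eq_card_SL_mul_card_units] at hGL
  refine Nat.eq_of_mul_eq_mul_right hpos (hGL.trans ?_)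
  rw [Nat.card_units]
  simp only [Fin.prod_univ_two, Fin.val_zero, Fin.val_one, pow_zero, pow_one,
    Nat.card_eq_fintype_card]
  rw [sq, ← Nat.mul_sub_one]
  ring

lemma card_PGL2 (K : Type*) [Field K] [Finite K] :
    Nat.card (PGL2 K) = Nat.card K * (Nat.card K ^ 2 - 1) := by
  rw [← card_SL2]
  exact Nat.eq_of_mul_eq_mul_right (Nat.card_pos (α := Kˣ))
    ((card_GL_eq_card_PGL_mul_card_units (Fin 2) K).symm.trans
      (card_GL_eq_card_SL_mul_card_units (Fin 2) K))

end Orders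

theorem index_pos_and_index_le_of_mulEquiv_PSL2 {F G : Type*} [Field F] [CharP F 2] [Group G]
    {f : ℕ} (hF : Nat.card F = 2 ^ f) {X : Subgroup G} [X.Normal] (e : X ≃* PSL2 F)
    (hX : Subgroup.centralizer (X : Set G) = ⊥) : 0 < X.index ∧ X.index ≤ f := by
  have : Finite F := Nat.finite_of_card_ne_zero (hF ▸ pow_ne_zero f two_ne_zero)
  let e' := e.trans (psl2EquivSL2 F)
  have : Finite X := Finite.of_equiv _ e'.symm.toEquiv
  have : Finite (MulAut X) := DFunLike.finite _
  have : Finite G := Finite.of_injective _ (conjNormal_injective hX)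
  refine ⟨Nat.pos_of_ne_zero X.index_ne_zero_of_finite,
    Nat.le_of_mul_le_mul_left ?_ (Nat.card_pos (α := X))⟩
  calc Nat.card X * X.index = Nat.card G := X.card_mul_index
    _ ≤ Nat.card (MulAut X) := Nat.card_le_card_of_injective _ (conjNormal_injective hX)
    _ = Nat.card (MulAut SL(2, F)) := Nat.card_congr (MulAut.congr e').toEquiv
    _ ≤ Nat.card SL(2, F) * f := card_mulAut_SL2_le hF
    _ = Nat.card X * f := by rw [Nat.card_congr e'.toEquiv]

lemma card_mul_card_stabilizer_of_mulEquiv_PSL2 {F X Pt : Type*} [Field F] [Finite F] [CharP F 2]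
    [Group X] [MulAction X Pt] [MulAction.IsPretransitive X Pt] (e : X ≃* PSL2 F) (x : Pt) :
    Nat.card Pt * Nat.card (MulAction.stabilizer X x) = Nat.card F * (Nat.card F ^ 2 - 1) := by
  rw [← card_SL2, ← Nat.card_congr (e.trans (psl2EquivSL2 F)).toEquiv,
    ← (MulAction.stabilizer X x).index_mul_card, MulAction.index_stabilizer_of_transitive]

lemma exists_eq_two_pow_of_card_eq_pow {F : Type*} [Field F] [Finite F] [CharP F 2] {q t : ℕ}
    (ht : t ≠ 0) (hq : Nat.card F = q ^ t) : ∃ s ≠ 0, q = 2 ^ s := by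
  have := Fintype.ofFinite F
  obtain ⟨f, -, hf⟩ := FiniteField.card F 2
  rw [← Nat.card_eq_fintype_card, hq] at hf
  obtain ⟨s, -, rfl⟩ := (Nat.dvd_prime_pow Nat.prime_two).1 (hf ▸ dvd_pow_self q ht)
  refine ⟨s, ?_, rfl⟩
  rintro rfl
  exact (Finite.one_lt_card (α := F)).ne' (by rw [hq, pow_zero, one_pow])

end Linear

theorem stmt_11_general {F Pt G : Type*} [Field F] [Finite F] [CharP F 2] [Finite Pt] [Group G]
    [MulAction G Pt] {𝓑 : Set (Set Pt)} {k : ℕ} (hD : IsDesign 𝓑 k 3) (hk : 1 < k)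
    (hkv : k < Nat.card Pt) (hacts : ActsOn G 𝓑) (hflag : FlagTransitive G 𝓑) (X : Subgroup G)
    [X.Normal] (e : X ≃* PSL2 F) (hX : Subgroup.centralizer (X : Set G) = ⊥)
    [MulAction.IsPretransitive X Pt] (α : Pt) {q₀ t : ℕ} (hq : Nat.card F = q₀ ^ t) (ht : 2 ≤ t)
    (hq₀ : q₀ ≠ 2) : Nat.card (MulAction.stabilizer X α) ≠ q₀ * (q₀ ^ 2 - 1) := by
  intro hstab
  obtain ⟨s, hs₀, rfl⟩ := exists_eq_two_pow_of_card_eq_pow (by omega) hq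
  have hs₁ : s ≠ 1 := by
    rintro rfl
    exact hq₀ (pow_one 2)
  have hr₁ : repNum 𝓑 α ∣ 3 * (Nat.card Pt - 1) := ⟨k - 1, (hD.repNum_mul_sub_one hk.le α).symm⟩
  have hr₂ : repNum 𝓑 α ∣ X.index * (2 ^ s * ((2 ^ s) ^ 2 - 1)) := by
    rw [← hstab, ← card_stabilizer_eq_index_mul]
    exact repNum_dvd_card_stabilizer hacts hflag
      (Nat.ne_zero_of_lt (hD.lt_repNum three_pos hk.le hkv α))
  obtain ⟨hindex₀, hindex⟩ :=
    index_pos_and_index_le_of_mulEquiv_PSL2 (hq.trans (pow_mul 2 s t).symm) e hX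
  have hv := card_mul_card_stabilizer_of_mulEquiv_PSL2 e α
  obtain ⟨t, rfl⟩ : ∃ u, t = u + 1 := ⟨t - 1, by omega⟩
  rw [hstab, hq] at hv
  exact (hD.mul_sub_one_lt_repNum_sq three_pos hk hkv α).not_ge
    (sq_le_three_mul_sub_one (by omega) (by omega) hv hr₁ hr₂ hindex₀ hindex)

end FT

/-- In the setting of a non-trivial, non-symmetric flag-transitive,
point-primitive `2-(v,k,3)` design with `3 ∣ r`, almost simple automorphism group `G` with
socle `X ≅ PSL(2,q)` acting point-primitively with maximal point stabilizer `X_α`: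
the stabilizer `X_α` is not isomorphic to a subfield subgroup `PGL(2,q₀)` with
`q = 2^f = q₀ᵗ`, `t` prime and `q₀ ≠ 2`. -/
theorem stmt_11
    (q : ℕ) (hq4 : 4 ≤ q)
    (F : Type) [Field F] [Fintype F] (hF : Fintype.card F = q)
    {Pt : Type*} [Fintype Pt] {G : Type*} [Group G] [MulAction G Pt] [FaithfulSMul G Pt]
    -- `D = (Pt, 𝓑)` is a non-trivial, non-symmetric `2-(v,k,3)` design …
    (𝓑 : Set (Set Pt)) (v k : ℕ) (hv : Nat.card Pt = v)
    (hD : IsDesign 𝓑 k 3) (hnt : 2 < k ∧ k < v - 1)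
    (hnonsym : Nat.card 𝓑 ≠ v)
    -- … whose replication number `r` is divisible by 3, …
    (r : ℕ) (hr : ∀ x : Pt, repNum 𝓑 x = r) (h3r : 3 ∣ r)
    -- … admitting the flag-transitive, point-primitive automorphism group `G`, …
    (hacts : ActsOn G 𝓑) (hflag : FlagTransitive G 𝓑)
    (hprim : PointPrimitive G Pt)
    -- … where `G` is almost simple with socle `X ≅ PSL(2,q)` (so `PSL(2,q) ⊴ G ≤ PΓL(2,q)`):
    (X : Subgroup G) (hXnormal : X.Normal)
    (hXiso : Nonempty (X ≃* PSL2 F))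
    (hXcent : Subgroup.centralizer (X : Set G) = ⊥)
    -- `X` acts point-primitively on `D`, with maximal point stabilizer `X_α`:
    (hXprim : PointPrimitive X Pt)
    (α : Pt) (hmax : IsCoatom (MulAction.stabilizer X α))
    :
    ∀ (q₀ t f : ℕ) (F₀ : Type) [Field F₀] [Fintype F₀], Fintype.card F₀ = q₀ →
      q = 2 ^ f → q = q₀ ^ t → t.Prime → q₀ ≠ 2 →
      IsEmpty ((MulAction.stabilizer X α) ≃* PGL2 F₀) := by
  intro q₀ t f F₀ _ _ hF₀ hqf hqt ht hq₀
  have : CharP F 2 := charP_of_card_eq_prime_pow (hF.trans hqf)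
  have := hXprim.1
  obtain ⟨e⟩ := hXiso
  subst hv
  refine ⟨fun eα ↦ stmt_11_general hD (by omega) (by omega) hacts hflag X e hXcent α
    (Nat.card_eq_fintype_card.trans (hF.trans hqt)) ht.two_le hq₀ ?_⟩
  rw [Nat.card_congr eα.toEquiv, card_PGL2, Nat.card_eq_fintype_card, hF₀]
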